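/- arXiv:2407.07710 — 2 statements merged into one kernel-verified Lean document; each statement's English description precedes it below -/
import Mathlib

section
/- Let q = p^m with p > 3 and q ≡ 5 (mod 6), and let f(x) = x^{q+2} on F_{q^2}. Then the differential spectrum of f is ω_0 = (3q+1)(q-1)/4, ω_1 = 1, ω_2 = q-1, ω_4 = (q-1)^2/4, where ω_i = #{b ∈ F_{q^2} : δ_f(1,b) = i}. -/
/-!
Put `y = x + 1/2` and write `x̄ = x ^ q`. Since `x ^ (q + 2) = x² x̄`, expanding gives
`(x + 1) ^ (q + 2) - x ^ (q + 2) = y² + 2 y ȳ + 1/4`.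

Let `F` be the subfield fixed by `x ↦ x ^ q`. Because `q ≡ 2 (mod 3)`, a primitive cube root of
unity `ω` of `K` satisfies `ω̄ = ω²`, so `ε = 2 ω + 1` satisfies `ε² = -3` and `ε̄ = -ε`
(`exists_conj_neg`). For every nonzero `c ∈ F` the map `(A, B) ↦ c (A + B) + (A - B) ε` is then
a bijection `F × F → K` (`coord_bijective`); in particular `F` has `q` elements.
Substituting `y = (A + B) + (A - B) ε` yields
`y² + 2 y ȳ = 2 (3 (A² + B²) + (A² - B²) ε)`,
so up to bijections on source and target the derivative is the map `(A, B) ↦ (A², B²)` of `F × F`.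
The fibre of this map over `(P, Q)` has `N P * N Q` elements, where `N` counts square roots in `F`;
`N` takes the value `1` only at `0`, the value `2` at `(q - 1) / 2` points, and `0` elsewhere.
-/

/-- The number of square roots of `P`. -/
noncomputable def sqrtCount {F : Type*} [Field F] (P : F) : ℕ := Nat.card {a : F // a ^ 2 = P}

@[simp]
lemma sqrtCount_zero {F : Type*} [Field F] : sqrtCount (0 : F) = 1 := by
  simp [sqrtCount]

lemma sqrtCount_sq {F : Type*} [Field F] (h2 : (2 : F) ≠ 0) {a : F} (ha : a ≠ 0) :
    sqrtCount (a ^ 2) = 2 := by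
  have hne : a ≠ -a := fun h => by
    exact (mul_ne_zero h2 ha) (by linear_combination h)
  have : {x : F | x ^ 2 = a ^ 2} = {a, -a} := by
    ext x
    simp [sq_eq_sq_iff_eq_or_eq_neg]
  unfold sqrtCount
  have hc := Set.ncard_pair hne
  rwa [← this] at hc

lemma sqrtCount_cases {F : Type*} [Field F] (h2 : (2 : F) ≠ 0) (P : F) :
    P = 0 ∧ sqrtCount P = 1 ∨ P ≠ 0 ∧ sqrtCount P = 2 ∨ P ≠ 0 ∧ sqrtCount P = 0 := by
  by_cases hP : P = 0
  · subst hP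
    exact Or.inl ⟨rfl, sqrtCount_zero⟩
  · by_cases h : ∃ a, a ^ 2 = P
    · obtain ⟨a, rfl⟩ := h
      exact Or.inr (Or.inl ⟨hP, sqrtCount_sq h2 (by rintro rfl; exact hP (zero_pow two_ne_zero))⟩)
    · refine Or.inr (Or.inr ⟨hP, ?_⟩)
      have : IsEmpty {a : F // a ^ 2 = P} := ⟨fun a => h ⟨a.1, a.2⟩⟩
      exact Nat.card_of_isEmpty

open Classical in
lemma card_sqrtCount_eq_one {F : Type*} [Field F] [Fintype F] (h2 : (2 : F) ≠ 0) :
    (Finset.univ.filter fun P : F => sqrtCount P = 1).card = 1 := by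
  rw [Finset.card_eq_one]
  refine ⟨0, ?_⟩
  ext P
  rcases sqrtCount_cases h2 P with h | h | h <;> simp [h]

open Classical in
/-- Every element of `F` is a square root of exactly one element, so summing `sqrtCount` over `F`
gives the number of elements of `F`. -/
lemma card_sqrtCount_eq_two {F : Type*} [Field F] [Fintype F] (h2 : (2 : F) ≠ 0) :
    1 + 2 * (Finset.univ.filter fun P : F => sqrtCount P = 2).card = Fintype.card F := by
  have h : Fintype.card F = ∑ P : F, sqrtCount P := by
    rw [← Finset.card_univ, Finset.card_eq_sum_card_fiberwise (f := fun a : F => a ^ 2)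
      (t := Finset.univ) (by simp)]
    refine Finset.sum_congr rfl fun P _ => ?_
    rw [sqrtCount, Nat.card_eq_fintype_card, Fintype.card_subtype]
  rw [h, ← card_sqrtCount_eq_one h2, Finset.card_filter, Finset.card_filter, Finset.mul_sum,
    ← Finset.sum_add_distrib]
  refine Finset.sum_congr rfl fun P _ => ?_
  rcases sqrtCount_cases h2 P with h | h | h <;> simp [h]

/-- The fibre sizes of `(A, B) ↦ (A², B²)`, as computed in `F × F`. -/
lemma sq_prod_spectrum {F : Type*} [Field F] [Fintype F] (h2 : (2 : F) ≠ 0) (q : ℕ)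
    (hF : Fintype.card F = q) :
    4 * Nat.card {b : F × F // sqrtCount b.1 * sqrtCount b.2 = 0} = (3 * q + 1) * (q - 1) ∧
    Nat.card {b : F × F // sqrtCount b.1 * sqrtCount b.2 = 1} = 1 ∧
    Nat.card {b : F × F // sqrtCount b.1 * sqrtCount b.2 = 2} = q - 1 ∧
    4 * Nat.card {b : F × F // sqrtCount b.1 * sqrtCount b.2 = 4} = (q - 1) ^ 2 := by
  classical
  simp only [Nat.card_eq_fintype_card, Fintype.card_subtype]
  have c1 := card_sqrtCount_eq_one h2
  have c2 := card_sqrtCount_eq_two h2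
  set S := Finset.univ.filter fun P : F => sqrtCount P = 1 with hS
  set T := Finset.univ.filter fun P : F => sqrtCount P = 2 with hT
  have e1 : (Finset.univ.filter fun b : F × F => sqrtCount b.1 * sqrtCount b.2 = 1)
      = S ×ˢ S := by
    ext ⟨P, Q⟩
    rcases sqrtCount_cases h2 P with h | h | h <;>
    rcases sqrtCount_cases h2 Q with h' | h' | h' <;> simp [hS, h, h']
  have e2 : (Finset.univ.filter fun b : F × F => sqrtCount b.1 * sqrtCount b.2 = 2)
      = S ×ˢ T ∪ T ×ˢ S := by
    ext ⟨P, Q⟩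
    rcases sqrtCount_cases h2 P with h | h | h <;>
    rcases sqrtCount_cases h2 Q with h' | h' | h' <;> simp [hS, hT, h, h']
  have e4 : (Finset.univ.filter fun b : F × F => sqrtCount b.1 * sqrtCount b.2 = 4)
      = T ×ˢ T := by
    ext ⟨P, Q⟩
    rcases sqrtCount_cases h2 P with h | h | h <;>
    rcases sqrtCount_cases h2 Q with h' | h' | h' <;> simp [hT, h, h']
  have e0 : (Finset.univ.filter fun b : F × F => sqrtCount b.1 * sqrtCount b.2 = 0)
      = ((S ∪ T) ×ˢ (S ∪ T))ᶜ := by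
    ext ⟨P, Q⟩
    rcases sqrtCount_cases h2 P with h | h | h <;>
    rcases sqrtCount_cases h2 Q with h' | h' | h' <;> simp [hS, hT, h, h']
  have hdST : Disjoint S T := by
    rw [Finset.disjoint_filter]
    intro P _ h
    omega
  have hd : Disjoint (S ×ˢ T) (T ×ˢ S) :=
    Finset.disjoint_product.2 (Or.inl hdST)
  have n0 := Finset.card_add_card_compl ((S ∪ T) ×ˢ (S ∪ T))
  rw [Finset.card_product, Finset.card_union_of_disjoint hdST, c1, Fintype.card_prod, hF] at n0
  rw [e0, e1, e2, e4, Finset.card_union_of_disjoint hd]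
  simp only [Finset.card_product, c1]
  rw [hF] at c2
  subst c2
  rw [Nat.add_sub_cancel_left]
  refine ⟨?_, trivial, by ring, by ring⟩
  nlinarith

/-- The distribution of fibre sizes is unchanged by bijections on source and target. -/
lemma card_fibre_transfer {X Y X' Y' : Type*} (f : X → Y) (g : X' → Y') (e : X' ≃ X) (e' : Y' ≃ Y)
    (h : ∀ a, f (e a) = e' (g a)) (i : ℕ) :
    Nat.card {b : Y // Nat.card {x : X // f x = b} = i} =
      Nat.card {b : Y' // Nat.card {x : X' // g x = b} = i} := by
  refine (Nat.card_congr (e'.subtypeEquiv fun b => ?_)).symm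
  rw [Nat.card_congr (e.subtypeEquiv (p := fun a => g a = b) (q := fun x => f x = e' b)
    fun a => by rw [h, e'.apply_eq_iff_eq])]

/-- An endomorphism of `K` that negates some `ε ≠ 0` and is an involution splits `K` over its
fixed field `F` as `F ⊕ F ε`; here the coordinates are moreover rotated, and the first one is scaled
by `c`. -/
lemma coord_bijective {K : Type*} [Field K] (φ : K →+* K) (hφ : ∀ x, φ (φ x) = x)
    (h2 : (2 : K) ≠ 0) {ε : K} (hε : ε ≠ 0) (hφε : φ ε = -ε) {c : K} (hc : c ≠ 0) (hφc : φ c = c) :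
    Function.Bijective fun a : φ.eqLocusField (RingHom.id K) × φ.eqLocusField (RingHom.id K) =>
      c * ((a.1 : K) + a.2) + ((a.1 : K) - a.2) * ε := by
  constructor
  · rintro ⟨⟨A, hA⟩, ⟨B, hB⟩⟩ ⟨⟨A', hA'⟩, ⟨B', hB'⟩⟩ h
    replace hA : φ A = A := hA
    replace hB : φ B = B := hB
    replace hA' : φ A' = A' := hA'
    replace hB' : φ B' = B' := hB'
    simp only at h
    have h' := congrArg φ h
    simp only [map_add, map_mul, map_sub, hA, hB, hA', hB', hφε, hφc] at h'
    have s : A + B = A' + B' :=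
      mul_left_cancel₀ (mul_ne_zero h2 hc) (by linear_combination h + h')
    have d : A - B = A' - B' :=
      mul_left_cancel₀ (mul_ne_zero h2 hε) (by linear_combination h - h')
    have ea : A = A' := mul_left_cancel₀ h2 (by linear_combination s + d)
    have eb : B = B' := mul_left_cancel₀ h2 (by linear_combination s - d)
    simp [ea, eb]
  · intro y
    refine ⟨⟨⟨((y + φ y) / (2 * c) + (y - φ y) / (2 * ε)) / 2, ?_⟩,
      ⟨((y + φ y) / (2 * c) - (y - φ y) / (2 * ε)) / 2, ?_⟩⟩, ?_⟩
    · rw [RingHom.mem_eqLocusField, RingHom.id_apply]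
      simp only [map_add, map_mul, map_sub, map_div₀, hφ, hφc, hφε, map_ofNat]
      field_simp
      ring
    · rw [RingHom.mem_eqLocusField, RingHom.id_apply]
      simp only [map_add, map_mul, map_sub, map_div₀, hφ, hφc, hφε, map_ofNat]
      field_simp
      ring
    · simp only
      field_simp
      ring

/-- `ε = 2 ω + 1` for a primitive cube root of unity `ω`, which exists since `3 ∣ q² - 1` and is
sent to `ω²` by `x ↦ x ^ q` since `q ≡ 2 (mod 3)`. -/
lemma exists_conj_neg {K : Type*} [Field K] [Fintype K] {q : ℕ} (h6 : q % 6 = 5)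
    (hK : Fintype.card K = q ^ 2) (φ : K →+* K) (hφ : ∀ x, φ x = x ^ q) :
    ∃ ε : K, ε ^ 2 = -3 ∧ φ ε = -ε := by
  classical
  have : Fact (Nat.Prime 3) := ⟨Nat.prime_three⟩
  obtain ⟨k, hk⟩ : ∃ k, q = 3 * k + 2 := ⟨q / 3, by omega⟩
  have hd : 3 ∣ Fintype.card Kˣ := by
    rw [Fintype.card_units, hK, hk]
    refine ⟨3 * k ^ 2 + 4 * k + 1, ?_⟩
    rw [Nat.sub_eq_iff_eq_add (by nlinarith)]
    ring
  obtain ⟨w, hw⟩ := exists_prime_orderOf_dvd_card 3 hd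
  have hw3 : (w : K) ^ 3 = 1 := by
    have := pow_orderOf_eq_one w
    rw [hw] at this
    rw [← Units.val_pow_eq_pow_val, this, Units.val_one]
  have hw1 : (w : K) ≠ 1 := by
    intro h
    rw [Units.val_eq_one.1 h, orderOf_one] at hw
    omega
  have hq : (w : K) ^ 2 + w + 1 = 0 :=
    mul_left_cancel₀ (sub_ne_zero.2 hw1) (by linear_combination hw3)
  have hφw : φ w = (w : K) ^ 2 := by
    rw [hφ, hk, pow_add, pow_mul, hw3, one_pow, one_mul]
  refine ⟨2 * w + 1, by linear_combination 4 * hq, ?_⟩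
  rw [map_add, map_mul, hφw, map_ofNat, map_one]
  linear_combination 2 * hq


/-- Differential spectrum of x^{q+2} over F_{q²} when p > 3 and q ≡ 5 (mod 6):
ω₀ = (3q+1)(q-1)/4, ω₁ = 1, ω₂ = q-1, ω₄ = (q-1)²/4. -/
theorem diff_spectrum_q_five_mod_six (p m q : ℕ) (hp : p.Prime) (hodd : Odd p)
    (hp3 : 3 < p) (hm : 0 < m) (hq : q = p ^ m) (h6 : q % 6 = 5)
    (K : Type*) [Field K] [Fintype K] (hK : Fintype.card K = q ^ 2) :
    4 * Nat.card {b : K //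
        Nat.card {x : K // (x + 1) ^ (q + 2) - x ^ (q + 2) = b} = 0}
      = (3 * q + 1) * (q - 1) ∧
    Nat.card {b : K //
        Nat.card {x : K // (x + 1) ^ (q + 2) - x ^ (q + 2) = b} = 1} = 1 ∧
    Nat.card {b : K //
        Nat.card {x : K // (x + 1) ^ (q + 2) - x ^ (q + 2) = b} = 2} = q - 1 ∧
    4 * Nat.card {b : K //
        Nat.card {x : K // (x + 1) ^ (q + 2) - x ^ (q + 2) = b} = 4}
      = (q - 1) ^ 2 := by
  have : Fact p.Prime := ⟨hp⟩
  have hKp : Fintype.card K = p ^ (m * 2) := by rw [hK, hq, pow_mul]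
  have : CharP K p := charP_of_card_eq_prime_pow hKp
  have hn : ∀ n : ℕ, 0 < n → n < p → (n : K) ≠ 0 := fun n h0 hlt h =>
    absurd (Nat.le_of_dvd h0 ((CharP.cast_eq_zero_iff K p n).1 h)) (by omega)
  have h2 : (2 : K) ≠ 0 := by exact_mod_cast hn 2 (by norm_num) (by omega)
  have h3 : (3 : K) ≠ 0 := by exact_mod_cast hn 3 (by norm_num) hp3
  let φ : K →+* K := iterateFrobenius K p m
  have hφ : ∀ x, φ x = x ^ q := fun x => by rw [hq]; exact iterateFrobenius_def p m x
  have hφφ : ∀ x, φ (φ x) = x := fun x => by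
    rw [hφ, hφ, ← pow_mul, ← pow_two, ← hK, FiniteField.pow_card]
  obtain ⟨ε, hε2, hφε⟩ := exists_conj_neg h6 hK φ hφ
  have hε : ε ≠ 0 := by
    rintro rfl
    exact h3 (by simpa using hε2.symm)
  let F := φ.eqLocusField (RingHom.id K)
  let _ : Fintype F := Fintype.ofFinite F
  let e₁ : F × F ≃ K := Equiv.ofBijective _
    (coord_bijective φ hφφ h2 hε hφε one_ne_zero (map_one φ))
  let e₃ : F × F ≃ K := Equiv.ofBijective _
    (coord_bijective φ hφφ h2 hε hφε h3 (map_ofNat φ 3))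
  have hF : Fintype.card F = q := by
    have := Fintype.card_congr e₁
    rw [Fintype.card_prod, hK, ← pow_two] at this
    exact Nat.pow_left_injective (by norm_num) this
  have h2F : (2 : F) ≠ 0 := fun h => h2 (congrArg Subtype.val h)
  let e : F × F ≃ K := e₁.trans (Equiv.subRight (1 / 2))
  let e' : F × F ≃ K := (e₃.trans (Equiv.mulLeft₀ 2 h2)).trans (Equiv.addRight (1 / 4))
  have key : ∀ a : F × F, (e a + 1) ^ (q + 2) - (e a) ^ (q + 2) = e' (a.1 ^ 2, a.2 ^ 2) := by
    rintro ⟨⟨A, hA⟩, ⟨B, hB⟩⟩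
    replace hA : φ A = A := hA
    replace hB : φ B = B := hB
    change ((1 * (A + B) + (A - B) * ε - 1 / 2) + 1) ^ (q + 2)
      - (1 * (A + B) + (A - B) * ε - 1 / 2) ^ (q + 2)
      = 2 * (3 * (A ^ 2 + B ^ 2) + (A ^ 2 - B ^ 2) * ε) + 1 / 4
    rw [pow_add, pow_add _ q, ← hφ, ← hφ]
    simp only [map_add, map_mul, map_sub, map_div₀, hA, hB, hφε, map_one, map_ofNat]
    obtain ⟨h, hh⟩ : ∃ h : K, 2 * h = 1 := ⟨1 / 2, by field_simp⟩
    have e2 : (1 / 2 : K) = h := by rw [← hh]; field_simp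
    have e4 : (1 / 4 : K) = h ^ 2 := by rw [← e2]; norm_num
    rw [e2, e4]
    -- `1 - h = h`, so the left side is an odd difference in `h` around `y = A + B + (A - B) ε`.
    have e1 : ∀ z : K, z - h + 1 = z + h := fun z => by linear_combination -hh
    rw [e1, e1]
    linear_combination (-(A - B) ^ 2) * hε2 +
      ((A + B + (A - B) * ε) ^ 2 + 2 * (A + B + (A - B) * ε) * (A + B - (A - B) * ε) + h ^ 2) * hh
  have fibre : ∀ b : F × F,
      Nat.card {a : F × F // (a.1 ^ 2, a.2 ^ 2) = b} = sqrtCount b.1 * sqrtCount b.2 := by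
    rintro ⟨P, Q⟩
    rw [sqrtCount, sqrtCount, ← Nat.card_prod]
    refine Nat.card_congr (Equiv.trans ?_ (Equiv.subtypeProdEquivProd
      (p := fun a : F => a ^ 2 = P) (q := fun a : F => a ^ 2 = Q)))
    exact Equiv.subtypeEquivRight fun a => by simp
  have main := sq_prod_spectrum h2F q hF
  simp only [← fibre] at main
  simp only [card_fibre_transfer (fun x : K => (x + 1) ^ (q + 2) - x ^ (q + 2))
    (fun a : F × F => (a.1 ^ 2, a.2 ^ 2)) e e' key]
  exact main
end

section
/- Let q = 3^m with m ≥ 1 and let f(x) = x^{q+2} on F_{q^2}. Then the ternary cyclic code C = { ( Tr_{F_{q^2}/F_3}(a α^{i(q+2)} + b α^i) )_{i=0}^{q^2-2} : a, b ∈ F_{q^2} } has the property that every nonzero codeword c_{a,b} with a ≠ 0 has Hamming weight (2q^2)/3 - (2/3) W, where W ∈ {-q, 0, q, 2q}; in particular every nonzero codeword has weight in { 2q(q-2)/3, 2q(q-1)/3, 2q^2/3, 2q(q+1)/3 }. -/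
/-!
Write `q = 3 ^ m`, let `F = {y ∈ K | y ^ q = y}` be the subfield with `q` elements, and split `Kˣ` into
the `q + 1` cosets `t * Fˣ`, `t = α ^ j` with `j ≤ q` (the elements of `Fˣ` are the powers of
`α ^ (q + 1)`). For `y ∈ F` one has `(y * t) ^ (q + 2) = y ^ 3 * t ^ (q + 2)`, so on the line `F * t` the
map `x ↦ Tr (a * x ^ (q + 2) + b * x)` is additive with values in `ZMod 3`: it either vanishes
identically, or is nonzero at exactly `2 * q / 3` of the `q` points (`three_mul_card_ne_zero`). Hence
`3 * weight = 2 * q * (q + 1 - N)`, where `N` is the number of lines on which it vanishes; this is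
the claim with `W = (N - 1) * q`, once `N ≤ 3` is known.

By Frobenius invariance the trace on the line is `Tr (y ^ 3 * c)` with
`c = a * t ^ (q + 2) + b ^ 3 * t ^ 3`. Cubing permutes `F`, so vanishing on the line and
nondegeneracy of the trace form give `c + c ^ q = 0` (`add_pow_eq_zero_of_trace`). Dividing by `t ^ 3`,
this says that `u = t ^ (q - 1)` is a root of
`b ^ (3 * q) * X ^ 3 + a ^ q * X ^ 2 + a * X + b ^ 3`, a nonzero polynomial of degree at most three
because `a ≠ 0`. Distinct lines give distinct `u`, so `N ≤ 3`.
-/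

theorem three_mul_card_ne_zero {G : Type*} [AddGroup G] [Finite G] (L : G →+ ZMod 3)
    (h : L ≠ 0) : 3 * Nat.card {g : G // L g ≠ 0} = 2 * Nat.card G := by
  have hr : L.range = ⊤ := by
    have : Fact (Nat.card (ZMod 3)).Prime := ⟨by simpa using Nat.prime_three⟩
    rcases AddSubgroup.eq_bot_or_eq_top_of_prime_card L.range with h1 | h1
    · exact absurd (AddMonoidHom.range_eq_bot_iff.1 h1) h
    · exact h1
  have h1 : Nat.card G = 3 * Nat.card {g : G // L g = 0} := by
    have h2 := AddSubgroup.card_mul_index L.ker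
    rw [AddSubgroup.index_ker, hr] at h2
    have h3 : Nat.card (⊤ : AddSubgroup (ZMod 3)) = 3 := by simp
    rw [h3] at h2
    rw [← h2, mul_comm]
    rfl
  have h2 : Nat.card {g : G // L g = 0} + Nat.card {g : G // ¬ L g = 0} = Nat.card G := by
    classical
    rw [← Nat.card_sum]
    exact Nat.card_congr (Equiv.sumCompl _)
  change 3 * Nat.card {g : G // ¬ L g = 0} = _
  omega

/-- The splitting of the exponents below `r * s` as `j + s * k`, with `j` indexing the lines. -/
theorem card_fin_mul (r s N : ℕ) (hN : N = r * s) (P : ℕ → Prop) :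
    Nat.card {i : Fin N // P i} = ∑ j : Fin s, Nat.card {k : Fin r // P (j + s * k)} := by
  subst hN
  rw [← Nat.card_sigma]
  symm
  refine Nat.card_congr ?_
  refine Equiv.trans (β := {p : Fin s × Fin r // P (p.1 + s * p.2)}) ?_ ?_
  · exact
      { toFun := fun x => ⟨(x.1, x.2.1), x.2.2⟩
        invFun := fun x => ⟨x.1.1, ⟨x.1.2, x.2⟩⟩
        left_inv := fun _ => rfl
        right_inv := fun _ => rfl }
  · refine Equiv.subtypeEquiv ((Equiv.prodComm _ _).trans finProdFinEquiv) ?_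
    intro p
    simp [finProdFinEquiv]

section

variable {K : Type*} [Field K] [CharP K 3]

/-- The subfield with `3 ^ m` elements, encoded as the additive group of fixed points of the
`m`-th iterate of Frobenius. -/
def fixedSub (K : Type*) [Field K] [CharP K 3] (m : ℕ) : AddSubgroup K where
  carrier := {y | y ^ 3 ^ m = y}
  zero_mem' := by simp
  add_mem' := by
    intro x y hx hy
    simp only [Set.mem_ofPred_eq] at *
    rw [add_pow_char_pow, hx, hy]
  neg_mem' := by
    intro x hx
    simp only [Set.mem_ofPred_eq] at *
    rw [Odd.neg_pow (Odd.pow (by decide)), hx]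

theorem mem_fixedSub {m : ℕ} {y : K} : y ∈ fixedSub K m ↔ y ^ 3 ^ m = y := Iff.rfl

/-- The nonzero elements of the fixed field are the powers of any primitive `(q - 1)`-th root of
unity, so a predicate failing at `0` can be counted along these powers. -/
theorem card_pow_eq_card_fixedSub {m : ℕ} (hm : 0 < m) {β : K}
    (hβ : IsPrimitiveRoot β (3 ^ m - 1)) (P : K → Prop) (hP : ¬ P 0) :
    Nat.card {k : Fin (3 ^ m - 1) // P (β ^ (k : ℕ))} = Nat.card {y : fixedSub K m // P y} := by
  have h3 : 3 ≤ 3 ^ m := by simpa using Nat.pow_le_pow_right (n := 3) (by norm_num) hm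
  have hq : 3 ^ m = (3 ^ m - 1) + 1 := by omega
  have hmem : ∀ k : ℕ, β ^ k ∈ fixedSub K m := by
    intro k
    rw [mem_fixedSub, ← pow_mul, mul_comm, pow_mul]
    congr 1
    rw [hq, pow_succ, hβ.pow_eq_one, one_mul]
  refine Nat.card_congr (Equiv.ofBijective (fun k => ⟨⟨β ^ (k.1 : ℕ), hmem _⟩, k.2⟩) ⟨?_, ?_⟩)
  · intro k l h
    simp only [Subtype.mk.injEq] at h
    exact Subtype.ext (Fin.ext (hβ.pow_inj k.1.2 l.1.2 h))
  · rintro ⟨⟨y, hy⟩, hPy⟩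
    have hy0 : y ≠ 0 := by
      rintro rfl
      exact hP hPy
    have h1 : y ^ (3 ^ m - 1) = 1 := by
      rw [mem_fixedSub, hq, pow_succ] at hy
      exact mul_right_cancel₀ hy0 (by rw [hy, one_mul])
    have : NeZero (3 ^ m - 1) := ⟨by omega⟩
    obtain ⟨i, hi, hiy⟩ := hβ.eq_pow_of_pow_eq_one h1
    refine ⟨⟨⟨i, hi⟩, ?_⟩, ?_⟩
    · simpa [hiy] using hPy
    · simp [hiy]

theorem card_fixedSub {m : ℕ} (hm : 0 < m) [Finite K] {β : K}
    (hβ : IsPrimitiveRoot β (3 ^ m - 1)) : Nat.card (fixedSub K m) = 3 ^ m := by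
  have h3 : 3 ≤ 3 ^ m := by simpa using Nat.pow_le_pow_right (n := 3) (by norm_num) hm
  have h := card_pow_eq_card_fixedSub hm hβ (fun y => y ≠ 0) (by simp)
  have hβ0 : β ≠ 0 := hβ.ne_zero (by omega)
  have h1 : Nat.card {k : Fin (3 ^ m - 1) // β ^ (k : ℕ) ≠ 0} = 3 ^ m - 1 := by
    rw [Nat.card_congr (Equiv.subtypeUnivEquiv (fun k => pow_ne_zero _ hβ0))]
    simp
  have h2 : Nat.card {y : fixedSub K m // y = 0} + Nat.card {y : fixedSub K m // ¬ y = 0}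
      = Nat.card (fixedSub K m) := by
    classical
    rw [← Nat.card_sum]
    exact Nat.card_congr (Equiv.sumCompl _)
  have h4 : Nat.card {y : fixedSub K m // ¬ y = 0}
      = Nat.card {y : fixedSub K m // (y : K) ≠ 0} :=
    Nat.card_congr (Equiv.subtypeEquivRight (fun y => by simp))
  have h5 : Nat.card {y : fixedSub K m // y = 0} = 1 := by simp
  omega

end

section

variable {K : Type*} [Field K] [Fintype K] [Algebra (ZMod 3) K] [CharP K 3]

theorem trace_pow_three_pow (n : ℕ) (x : K) :
    Algebra.trace (ZMod 3) K (x ^ 3 ^ n) = Algebra.trace (ZMod 3) K x := by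
  induction n with
  | zero => simp
  | succ n ih =>
    rw [← ih, pow_succ, pow_mul]
    have h := Algebra.trace_eq_of_algEquiv
      (FiniteField.frobeniusAlgEquivOfAlgebraic (ZMod 3) K) (x ^ 3 ^ n)
    simpa [FiniteField.coe_frobeniusAlgEquivOfAlgebraic] using h

/-- The trace to `F_q` of an element `c` orthogonal to `F_q` vanishes: test against `z = x + x ^ q`,
for which `Tr (z * c) = Tr (x * (c + c ^ q))`. -/
theorem add_pow_eq_zero_of_trace {m : ℕ} (hK : Fintype.card K = (3 ^ m) ^ 2) (c : K)
    (h : ∀ z ∈ fixedSub K m, Algebra.trace (ZMod 3) K (z * c) = 0) : c + c ^ 3 ^ m = 0 := by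
  have hpow : ∀ x : K, (x ^ 3 ^ m) ^ 3 ^ m = x := by
    intro x
    rw [← pow_mul, ← sq, ← hK, FiniteField.pow_card]
  refine (traceForm_nondegenerate (ZMod 3) K).1 _ ?_
  intro x
  rw [Algebra.traceForm_apply]
  have h1 := h (x + x ^ 3 ^ m) (by
    rw [mem_fixedSub, add_pow_char_pow, hpow, add_comm])
  rw [add_mul, map_add, ← trace_pow_three_pow m (x ^ 3 ^ m * c), mul_pow, hpow, ← map_add,
    ← mul_add] at h1
  rw [mul_comm, h1]

/-- The map `y ↦ Tr (a * (y * t) ^ (q + 2) + b * (y * t))` on the fixed field, written in the form in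
which its additivity is visible. -/
noncomputable def lineHom (m : ℕ) (a b t : K) : fixedSub K m →+ ZMod 3 where
  toFun y := Algebra.trace (ZMod 3) K (a * (y : K) ^ 3 * t ^ (3 ^ m + 2) + b * (y * t))
  map_zero' := by simp
  map_add' x y := by
    rw [← map_add]
    congr 1
    push_cast
    rw [add_pow_char]
    ring

theorem lineHom_apply (m : ℕ) (a b t : K) (y : fixedSub K m) :
    lineHom m a b t y
      = Algebra.trace (ZMod 3) K (a * (y * t) ^ (3 ^ m + 2) + b * (y * t)) := by
  have hy : (y : K) ^ 3 ^ m = y := y.2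
  have h : ((y : K) * t) ^ (3 ^ m + 2) = (y : K) ^ 3 * t ^ (3 ^ m + 2) := by
    rw [mul_pow, pow_add (y : K), hy]
    ring
  rw [h, ← mul_assoc]
  rfl

/-- A line on which the form vanishes gives a root of a fixed cubic. -/
theorem cubic_eq_zero_of_lineHom {m : ℕ} (hm : 0 < m) (hK : Fintype.card K = (3 ^ m) ^ 2)
    (a b t : K) (ht : t ≠ 0) (h : lineHom m a b t = 0) :
    b ^ (3 * 3 ^ m) * (t ^ (3 ^ m - 1)) ^ 3 + a ^ 3 ^ m * (t ^ (3 ^ m - 1)) ^ 2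
      + a * t ^ (3 ^ m - 1) + b ^ 3 = 0 := by
  have hc : ∀ z ∈ fixedSub K m,
      Algebra.trace (ZMod 3) K (z * (a * t ^ (3 ^ m + 2) + b ^ 3 * t ^ 3)) = 0 := by
    intro z hz
    -- `z ^ (q / 3)` is the cube root of `z` inside the fixed field
    have hy : z ^ 3 ^ (m - 1) ∈ fixedSub K m := by
      rw [mem_fixedSub] at hz ⊢
      rw [← pow_mul, mul_comm, pow_mul, hz]
    have hy3 : (z ^ 3 ^ (m - 1)) ^ 3 = z := by
      rw [← pow_mul, ← pow_succ, Nat.sub_add_cancel hm]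
      exact hz
    have h1 : lineHom m a b t ⟨_, hy⟩ = 0 := by rw [h]; rfl
    change Algebra.trace (ZMod 3) K (a * (z ^ 3 ^ (m - 1)) ^ 3 * t ^ (3 ^ m + 2)
      + b * (z ^ 3 ^ (m - 1) * t)) = 0 at h1
    rw [map_add, ← trace_pow_three_pow 1 (b * _), pow_one, mul_pow, mul_pow, hy3, ← map_add] at h1
    rw [← h1]
    congr 1
    ring
  have h2 := add_pow_eq_zero_of_trace hK _ hc
  have htq : (t ^ 3 ^ m) ^ 3 ^ m = t := by
    rw [← pow_mul, ← sq, ← hK, FiniteField.pow_card]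
  have hu : t ^ 3 ^ m = t ^ (3 ^ m - 1) * t := by
    rw [← pow_succ, Nat.sub_add_cancel (Nat.one_le_pow _ _ (by norm_num))]
  have e1 : (t ^ (3 ^ m + 2)) ^ 3 ^ m = t * (t ^ 3 ^ m) ^ 2 := by
    rw [pow_add, mul_pow, htq, ← pow_mul, ← pow_mul, mul_comm 2]
  have e2 : (t ^ 3) ^ 3 ^ m = (t ^ 3 ^ m) ^ 3 := by
    rw [← pow_mul, ← pow_mul, mul_comm]
  rw [add_pow_char_pow, mul_pow, mul_pow, e1, e2, pow_add t, hu, ← pow_mul b] at h2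
  refine (mul_eq_zero.1 ?_).resolve_left (pow_ne_zero 3 ht)
  rw [← h2]
  ring

end

open Polynomial in
theorem card_cubic_roots_le {K : Type*} [Field K] (A B C D : K) (hC : C ≠ 0) (s : Finset K)
    (hs : ∀ u ∈ s, A * u ^ 3 + B * u ^ 2 + C * u + D = 0) : s.card ≤ 3 := by
  have h0 : (Cubic.mk A B C D).toPoly ≠ 0 := by
    intro h
    have := congrArg (fun p => p.coeff 1) h
    simp only [Cubic.coeff_eq_c, coeff_zero] at this
    exact hC this
  have h1 : (Cubic.mk A B C D).toPoly.natDegree ≤ 3 := by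
    rw [natDegree_le_iff_coeff_eq_zero]
    intro n hn
    exact Cubic.coeff_eq_zero hn
  refine le_trans (card_le_degree_of_subset_roots ?_) h1
  intro u hu
  rw [mem_roots h0]
  simpa [Cubic.toPoly, IsRoot] using hs u hu

/-- The weight in terms of the number `N ≤ 3` of lines on which the codeword vanishes. -/
theorem exists_three_mul_weight (m : ℕ) (hm : 0 < m)
    (K : Type*) [Field K] [Fintype K] [Algebra (ZMod 3) K]
    (hK : Fintype.card K = (3 ^ m) ^ 2)
    (α : K) (hα : orderOf α = (3 ^ m) ^ 2 - 1)
    (a b : K) (ha : a ≠ 0) :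
    ∃ N ≤ 3, 3 * Nat.card {i : Fin ((3 ^ m) ^ 2 - 1) //
        Algebra.trace (ZMod 3) K
          (a * α ^ ((i : ℕ) * (3 ^ m + 2)) + b * α ^ (i : ℕ)) ≠ 0}
      = 2 * 3 ^ m * (3 ^ m + 1 - N) := by
  classical
  have : CharP K 3 := charP_of_injective_algebraMap' (ZMod 3) 3
  have h3 : 3 ≤ 3 ^ m := by simpa using Nat.pow_le_pow_right (n := 3) (by norm_num) hm
  have hfac : (3 ^ m) ^ 2 - 1 = (3 ^ m - 1) * (3 ^ m + 1) := by
    rw [mul_comm]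
    simpa using Nat.sq_sub_sq (3 ^ m) 1
  have hpos : 0 < (3 ^ m) ^ 2 - 1 := by
    rw [hfac]
    exact Nat.mul_pos (by omega) (by omega)
  have hprim : IsPrimitiveRoot α ((3 ^ m) ^ 2 - 1) := hα ▸ IsPrimitiveRoot.orderOf α
  have hα0 : α ≠ 0 := hprim.ne_zero hpos.ne'
  have hβ : IsPrimitiveRoot (α ^ (3 ^ m + 1)) (3 ^ m - 1) :=
    hprim.pow hpos (by rw [hfac, mul_comm])
  have hγ : IsPrimitiveRoot (α ^ (3 ^ m - 1)) (3 ^ m + 1) := hprim.pow hpos hfac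
  let Z : Finset (Fin (3 ^ m + 1)) :=
    Finset.univ.filter fun j => lineHom m a b (α ^ (j : ℕ)) = 0
  refine ⟨Z.card, ?_, ?_⟩
  · have hinj : Set.InjOn (fun j : Fin (3 ^ m + 1) => (α ^ (3 ^ m - 1)) ^ (j : ℕ)) Z := by
      intro i _ j _ h
      exact Fin.ext (hγ.pow_inj i.2 j.2 h)
    rw [← Finset.card_image_of_injOn hinj]
    refine card_cubic_roots_le (b ^ (3 * 3 ^ m)) (a ^ 3 ^ m) a (b ^ 3) ha _ ?_
    intro u hu
    obtain ⟨j, hj, rfl⟩ := Finset.mem_image.1 hu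
    have hj' := cubic_eq_zero_of_lineHom hm hK a b (α ^ (j : ℕ)) (pow_ne_zero _ hα0)
      (Finset.mem_filter.1 hj).2
    have e : (α ^ (3 ^ m - 1)) ^ (j : ℕ) = (α ^ (j : ℕ)) ^ (3 ^ m - 1) := by
      rw [← pow_mul, ← pow_mul, mul_comm]
    simp only [e]
    exact hj'
  · rw [card_fin_mul (3 ^ m - 1) (3 ^ m + 1) _ hfac (fun i => Algebra.trace (ZMod 3) K
          (a * α ^ (i * (3 ^ m + 2)) + b * α ^ i) ≠ 0), Finset.mul_sum]
    have hline : ∀ j : Fin (3 ^ m + 1), 3 * Nat.card {k : Fin (3 ^ m - 1) //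
        Algebra.trace (ZMod 3) K
          (a * α ^ (((j : ℕ) + (3 ^ m + 1) * k) * (3 ^ m + 2))
            + b * α ^ ((j : ℕ) + (3 ^ m + 1) * k)) ≠ 0}
        = if lineHom m a b (α ^ (j : ℕ)) = 0 then 0 else 2 * 3 ^ m := by
      intro j
      have h1 := card_pow_eq_card_fixedSub hm hβ
        (fun y => Algebra.trace (ZMod 3) K
          (a * (y * α ^ (j : ℕ)) ^ (3 ^ m + 2) + b * (y * α ^ (j : ℕ))) ≠ 0) (by simp)
      simp only [← lineHom_apply] at h1
      have e : ∀ k : ℕ, α ^ ((j : ℕ) + (3 ^ m + 1) * k)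
          = (α ^ (3 ^ m + 1)) ^ k * α ^ (j : ℕ) := by
        intro k
        rw [pow_add, pow_mul, mul_comm]
      simp only [pow_mul α (_ + _), e]
      rw [h1]
      split_ifs with h
      · simp [h]
      · rw [three_mul_card_ne_zero _ h, card_fixedSub hm hβ]
    rw [Finset.sum_congr rfl (fun j _ => hline j), Finset.sum_ite, Finset.sum_const_zero, zero_add,
      Finset.sum_const, smul_eq_mul, mul_comm]
    congr 1
    have := Finset.card_filter_add_card_filter_not (s := (Finset.univ : Finset (Fin (3 ^ m + 1))))
      (fun j => lineHom m a b (α ^ (j : ℕ)) = 0)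
    rw [Finset.card_univ, Fintype.card_fin] at this
    change _ = 3 ^ m + 1 - (Finset.univ.filter fun j : Fin (3 ^ m + 1) =>
      lineHom m a b (α ^ (j : ℕ)) = 0).card
    omega


/-- Weights of the ternary cyclic code associated with x^{q+2} over F_{q²},
q = 3^m: every codeword c_{a,b} with a ≠ 0 has Hamming weight
(2q²)/3 - (2/3)·W for some Walsh value W ∈ {-q, 0, q, 2q}; in particular its
weight lies in {2q(q-2)/3, 2q(q-1)/3, 2q²/3, 2q(q+1)/3}. -/
theorem cyclic_code_weights (m q : ℕ) (hm : 0 < m) (hq : q = 3 ^ m)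
    (K : Type*) [Field K] [Fintype K] [Algebra (ZMod 3) K]
    (hK : Fintype.card K = q ^ 2)
    (α : K) (hα : orderOf α = q ^ 2 - 1)
    (a b : K) (ha : a ≠ 0) :
    (∃ W : ℤ, W ∈ ({-(q : ℤ), 0, (q : ℤ), 2 * (q : ℤ)} : Set ℤ) ∧
      3 * (Nat.card {i : Fin (q ^ 2 - 1) //
          Algebra.trace (ZMod 3) K
            (a * α ^ ((i : ℕ) * (q + 2)) + b * α ^ (i : ℕ)) ≠ 0} : ℤ)
        = 2 * q ^ 2 - 2 * W) ∧
    3 * Nat.card {i : Fin (q ^ 2 - 1) //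
        Algebra.trace (ZMod 3) K
          (a * α ^ ((i : ℕ) * (q + 2)) + b * α ^ (i : ℕ)) ≠ 0}
      ∈ ({2 * q * (q - 2), 2 * q * (q - 1), 2 * q ^ 2, 2 * q * (q + 1)} : Set ℕ) := by
  subst hq
  obtain ⟨N, hN, h⟩ := exists_three_mul_weight m hm K hK α hα a b ha
  have h3 : 3 ≤ 3 ^ m := by simpa using Nat.pow_le_pow_right (n := 3) (by norm_num) hm
  constructor
  · refine ⟨((N : ℤ) - 1) * (3 ^ m : ℕ), ?_, ?_⟩
    · interval_cases N <;> simp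
    · have h' := congrArg (Nat.cast : ℕ → ℤ) h
      rw [Nat.cast_mul, Nat.cast_mul, Nat.cast_sub (by omega)] at h'
      push_cast at h' ⊢
      rw [h']
      ring
  · rw [h]
    interval_cases N
    · simp
    · simp [sq, mul_assoc]
    · simp
    · simp
end
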